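/- For every projection game G, every ρ with 0 ≤ ρ ≤ 1 such that val(G) ≤ ρ, and every positive integer k, val(G^{⊗k}) ≤ (4ρ)^{k/4}. -/

import Mathlib

open Finset

/-- A projection game: finite nonempty question sets `Q1` (Alice) and `Q2` (Bob),
a finite nonempty alphabet `A`, and a probability mass function `μ` on triples
`(u, v, π)` where `π : A → Option A` encodes a projection constraint
(the answer pair `(α, β)` satisfies `π` iff `π β = some α`). -/
structure ProjGame where
  Q1 : Type
  Q2 : Type
  A : Type
  [fQ1 : Fintype Q1]
  [fQ2 : Fintype Q2]
  [fA : Fintype A]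
  [neQ1 : Nonempty Q1]
  [neQ2 : Nonempty Q2]
  [neA : Nonempty A]
  [dQ1 : DecidableEq Q1]
  [dQ2 : DecidableEq Q2]
  [dA : DecidableEq A]
  μ : Q1 × Q2 × (A → Option A) → ℝ
  μ_nonneg : ∀ x, 0 ≤ μ x
  μ_sum : ∑ x, μ x = 1

attribute [instance] ProjGame.fQ1 ProjGame.fQ2 ProjGame.fA
  ProjGame.neQ1 ProjGame.neQ2 ProjGame.neA ProjGame.dQ1 ProjGame.dQ2 ProjGame.dA

namespace ProjGame

variable (G : ProjGame)

/-- The `U`-marginal (Alice-side marginal) of `μ`. -/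
noncomputable def wU (u : G.Q1) : ℝ := ∑ v, ∑ π, G.μ (u, v, π)

/-- The `V`-marginal (Bob-side marginal) of `μ`. -/
noncomputable def wV (v : G.Q2) : ℝ := ∑ u, ∑ π, G.μ (u, v, π)

/-- The game operator: `(Gf)(u,α) = E_{(v,π)|u} [∑_{β : π β = some α} f (v,β)]`. -/
noncomputable def op (f : G.Q2 × G.A → ℝ) : G.Q1 × G.A → ℝ :=
  fun p =>
    (∑ v, ∑ π, G.μ (p.1, v, π) * ∑ β, if π β = some p.2 then f (v, β) else 0) / G.wU p.1

/-- Squared norm on functions on `U × Σ`: `‖g‖² = E_u [∑_α g(u,α)²]`. -/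
noncomputable def normUsq (g : G.Q1 × G.A → ℝ) : ℝ := ∑ u, G.wU u * ∑ α, (g (u, α)) ^ 2

/-- Squared norm on functions on `V × Σ`: `‖f‖² = E_v [∑_β f(v,β)²]`. -/
noncomputable def normVsq (f : G.Q2 × G.A → ℝ) : ℝ := ∑ v, G.wV v * ∑ β, (f (v, β)) ^ 2

/-- Inner product `⟨g, g'⟩ = E_u [∑_α g(u,α) g'(u,α)]`. -/
noncomputable def inn (g g' : G.Q1 × G.A → ℝ) : ℝ :=
  ∑ u, G.wU u * ∑ α, g (u, α) * g' (u, α)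

/-- An assignment for Bob. -/
def IsBob (f : G.Q2 × G.A → ℝ) : Prop := (∀ p, 0 ≤ f p) ∧ ∀ v, ∑ β, f (v, β) = 1

/-- An assignment for Alice. -/
def IsAlice (g : G.Q1 × G.A → ℝ) : Prop := (∀ p, 0 ≤ g p) ∧ ∀ u, ∑ α, g (u, α) = 1

/-- The value of the game: `val(G) = max ⟨g, Gf⟩` over assignments. -/
noncomputable def val : ℝ :=
  sSup { x | ∃ f g, G.IsBob f ∧ G.IsAlice g ∧ x = G.inn g (G.op f) }

/-- The collision value `‖G‖ = max_f ‖Gf‖` over assignments `f` for Bob. -/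
noncomputable def collVal : ℝ :=
  sSup { x | ∃ f, G.IsBob f ∧ x = Real.sqrt (G.normUsq (G.op f)) }

/-- Product of projection constraints. -/
def tensorC {A A' : Type} (π : A → Option A) (π' : A' → Option A') :
    A × A' → Option (A × A') :=
  fun b => (π b.1).bind fun a => (π' b.2).map fun a' => (a, a')

/-- The product (parallel repetition) of two projection games. -/
noncomputable def tensor (G H : ProjGame) : ProjGame where
  Q1 := G.Q1 × H.Q1
  Q2 := G.Q2 × H.Q2
  A := G.A × H.A
  μ := fun x =>
    ∑ y : (G.Q1 × G.Q2 × (G.A → Option G.A)) × (H.Q1 × H.Q2 × (H.A → Option H.A)),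
      if ((y.1.1, y.2.1), (y.1.2.1, y.2.2.1), tensorC y.1.2.2 y.2.2.2) = x
      then G.μ y.1 * H.μ y.2 else 0
  μ_nonneg := by
    intro x
    refine Finset.sum_nonneg fun y _ => ?_
    split
    · exact mul_nonneg (G.μ_nonneg _) (H.μ_nonneg _)
    · exact le_refl 0
  μ_sum := by
    rw [Finset.sum_comm]
    simp only [Finset.sum_ite_eq, Finset.mem_univ, if_true]
    rw [Fintype.sum_prod_type]
    calc (∑ y1, ∑ y2, G.μ y1 * H.μ y2)
        = (∑ y1, G.μ y1) * (∑ y2, H.μ y2) := by rw [Finset.sum_mul_sum]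
      _ = 1 := by rw [G.μ_sum, H.μ_sum, mul_one]

/-- `G.iterTensor k` is the `(k+1)`-fold parallel repetition `G^{⊗(k+1)}`. -/
noncomputable def iterTensor (G : ProjGame) : ℕ → ProjGame
  | 0 => G
  | n + 1 => G.tensor (G.iterTensor n)

/-- `val₊(G)`: supremum of values of vector assignments. -/
noncomputable def valPlus (G : ProjGame) : ℝ :=
  sSup { x | ∃ n : ℕ, 0 < n ∧ ∃ f : G.Q2 × G.A → Fin n → ℝ,
    (∀ p i, 0 ≤ f p i) ∧
    (∀ v, Real.sqrt (∑ i, (∑ β, f (v, β) i) ^ 2) ≤ 1) ∧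
    x = Real.sqrt (∑ u, G.wU u * ∑ α, ∑ i, (G.op (fun q => f q i) (u, α)) ^ 2) }

/-- `‖Th‖² = E_v [(∑_β h(v,β))²]`. -/
noncomputable def Tnormsq (G : ProjGame) (h : G.Q2 × G.A → ℝ) : ℝ :=
  ∑ v, G.wV v * (∑ β, h (v, β)) ^ 2

/-- `λ₊(G)`: supremum of `‖Gh‖/‖Th‖` over nonnegative `h` with `‖Th‖ > 0`. -/
noncomputable def lambdaPlus (G : ProjGame) : ℝ :=
  sSup { x | ∃ h : G.Q2 × G.A → ℝ, (∀ p, 0 ≤ h p) ∧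
    0 < Real.sqrt (G.Tnormsq h) ∧
    x = Real.sqrt (G.normUsq (G.op h)) / Real.sqrt (G.Tnormsq h) }

/-- The symmetrized distribution on `V × V` (with the constraints marginalized out). -/
noncomputable def msym (G : ProjGame) (v v' : G.Q2) : ℝ :=
  ∑ u, ((∑ π, G.μ (u, v, π)) * (∑ π', G.μ (u, v', π'))) / G.wU u

/-- `G` is `γ`-expanding: the Markov operator of the symmetrized constraint graph has
spectral gap at least `γ`, i.e. `|⟨x, Ax⟩| ≤ (1-γ) E_v[x(v)²]` for mean-zero `x`. -/
def IsExpanding (G : ProjGame) (γ : ℝ) : Prop :=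
  ∀ x : G.Q2 → ℝ, (∑ v, G.wV v * x v) = 0 →
    |∑ v, ∑ v', G.msym v v' * x v * x v'| ≤ (1 - γ) * ∑ v, G.wV v * (x v) ^ 2

/-- The symmetrized distribution on `(v, v', π, π')`. -/
noncomputable def msymFull (G : ProjGame) (v v' : G.Q2) (π π' : G.A → Option G.A) : ℝ :=
  ∑ u, (G.μ (u, v, π) * G.μ (u, v', π')) / G.wU u

/-- The value of the assignment `x` in the symmetrized game `G_sym`. -/
noncomputable def symValAssign (G : ProjGame) (x : G.Q2 → G.A) : ℝ :=
  ∑ v, ∑ v', ∑ π, ∑ π', G.msymFull v v' π π' *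
    (if ∃ α, π (x v) = some α ∧ π' (x v') = some α then 1 else 0)

/-- The value of the symmetrized game `G_sym`. -/
noncomputable def symVal (G : ProjGame) : ℝ :=
  sSup { r | ∃ x : G.Q2 → G.A, r = G.symValAssign x }

end ProjGame

/-!
The collision value `‖G‖ = max_f ‖Gf‖` satisfies `val(G) ≤ ‖G‖ ≤ √val(G)`, by Cauchy-Schwarz and by
letting Alice play `Gf`. Applying `H` to one coordinate of an assignment for `G ⊗ H` leaves a vector
assignment for `G` of norm at most `‖H‖`, so `‖G ⊗ H‖ ≤ val₊(G) ‖H‖` and `‖G^{⊗k}‖ ≤ val₊(G)^k`.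

It remains to see that `val₊(G)² ≤ 2 ‖G‖`, since then `val₊(G) ≤ (4ρ)^{1/4}`. Write the `i`-th
coordinate of a vector assignment as `x_i(v) h_i(v, β)` with `h_i` an assignment for Bob. Since
`(x_i(v) x_i(v'))² = min(x_i(v)², x_i(v')²) · max(x_i(v)², x_i(v')²)`, Cauchy-Schwarz bounds the
quadratic form of `G` by the geometric mean of its versions with weights `min` and `max`. The `max`
version is at most `2` because `max ≤ sum`. The `min` version is at most `2 ‖G‖²`, because
`min(x_i(v)², x_i(v')²)` is the probability that both `x_i(v)²` and `x_i(v')²` exceed a common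
uniform threshold.
-/

lemma sq_sum_mul_le_sum_min_mul_sum_max {ι : Type*} (s : Finset ι) {w : ι → ℝ}
    (hw : ∀ i ∈ s, 0 ≤ w i) (a b : ι → ℝ) :
    (∑ i ∈ s, w i * (a i * b i)) ^ 2 ≤
      (∑ i ∈ s, w i * min (a i ^ 2) (b i ^ 2)) * ∑ i ∈ s, w i * max (a i ^ 2) (b i ^ 2) := by
  refine sum_sq_le_sum_mul_sum_of_sq_le_mul s (fun i hi ↦ mul_nonneg (hw i hi) (by positivity))
    (fun i hi ↦ mul_nonneg (hw i hi) (by positivity)) fun i _ ↦ le_of_eq ?_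
  rw [mul_mul_mul_comm, min_mul_max]
  ring

lemma volume_restrict_Ioc_real_Iic {a : ℝ} (ha : a ∈ Set.Icc (0 : ℝ) 1) :
    (MeasureTheory.volume.restrict (Set.Ioc (0 : ℝ) 1)).real (Set.Iic a) = a := by
  rw [MeasureTheory.measureReal_restrict_apply measurableSet_Iic, Set.inter_comm,
    Set.Ioc_inter_Iic, min_eq_right ha.2, Real.volume_real_Ioc_of_le ha.1, sub_zero]

lemma volume_restrict_Ioc_real_Ioi {a : ℝ} (ha : a ∈ Set.Icc (0 : ℝ) 1) :
    (MeasureTheory.volume.restrict (Set.Ioc (0 : ℝ) 1)).real (Set.Ioi a) = 1 - a := by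
  rw [MeasureTheory.measureReal_restrict_apply measurableSet_Ioi, Set.inter_comm,
    Set.Ioc_inter_Ioi, max_eq_right ha.1, Real.volume_real_Ioc_of_le ha.2]

open MeasureTheory in
/-- Average the hypothesis over `τ` uniform in `(0, 1]` and drop the mixed terms. -/
lemma sum_min_add_one_sub_max_le {X : Type*} [Fintype X] {W : X × X → ℝ} (hW : ∀ z, 0 ≤ W z)
    {h F y : X → ℝ} (hh : ∀ x, 0 ≤ h x) (hF : ∀ x, 0 ≤ F x) (hy : ∀ x, y x ∈ Set.Icc (0 : ℝ) 1)
    {κ : ℝ} (hκ : ∀ τ, ∑ z, W z * ((if τ ≤ y z.1 then h z.1 else F z.1) *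
      (if τ ≤ y z.2 then h z.2 else F z.2)) ≤ κ) :
    ∑ z, W z * (min (y z.1) (y z.2) * (h z.1 * h z.2) +
      (1 - max (y z.1) (y z.2)) * (F z.1 * F z.2)) ≤ κ := by
  let both (z : X × X) : ℝ → ℝ := (Set.Iic (min (y z.1) (y z.2))).indicator fun _ ↦ h z.1 * h z.2
  let neither (z : X × X) : ℝ → ℝ :=
    (Set.Ioi (max (y z.1) (y z.2))).indicator fun _ ↦ F z.1 * F z.2
  let ν : Measure ℝ := volume.restrict (Set.Ioc 0 1)
  have both_int (z) : Integrable (both z) ν := (integrable_const _).indicator measurableSet_Iic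
  have neither_int (z) : Integrable (neither z) ν :=
    (integrable_const _).indicator measurableSet_Ioi
  have integrable_summand (z) : Integrable (fun τ ↦ W z * (both z τ + neither z τ)) ν :=
    ((both_int z).add (neither_int z)).const_mul _
  have bound (τ : ℝ) : ∑ z, W z * (both z τ + neither z τ) ≤ κ := by
    refine (sum_le_sum fun z _ ↦ mul_le_mul_of_nonneg_left ?_ (hW z)).trans (hκ τ)
    have := mul_nonneg (hh z.1) (hF z.2)
    have := mul_nonneg (hF z.1) (hh z.2)
    by_cases h₁ : τ ≤ y z.1 <;> by_cases h₂ : τ ≤ y z.2 <;>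
      simp [both, neither, ← not_le, *]
  calc ∑ z, W z * (min (y z.1) (y z.2) * (h z.1 * h z.2) +
        (1 - max (y z.1) (y z.2)) * (F z.1 * F z.2))
      = ∫ τ, ∑ z, W z * (both z τ + neither z τ) ∂ν := by
        rw [integral_finsetSum _ fun z _ ↦ integrable_summand z]
        refine sum_congr rfl fun z _ ↦ ?_
        rw [integral_const_mul, integral_add (both_int z) (neither_int z),
          integral_indicator_const _ measurableSet_Iic,
          integral_indicator_const _ measurableSet_Ioi,
          volume_restrict_Ioc_real_Iic ⟨le_min (hy _).1 (hy _).1, min_le_of_left_le (hy _).2⟩,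
          volume_restrict_Ioc_real_Ioi ⟨le_max_of_le_left (hy _).1, max_le (hy _).2 (hy _).2⟩,
          smul_eq_mul, smul_eq_mul]
    _ ≤ ∫ _, κ ∂ν := integral_mono (integrable_finsetSum _ fun z _ ↦ integrable_summand z)
        (integrable_const κ) bound
    _ = κ := by simp [ν]

namespace ProjGame

variable (G : ProjGame)

section Operator

lemma wU_nonneg (u : G.Q1) : 0 ≤ G.wU u :=
  sum_nonneg fun _ _ ↦ sum_nonneg fun _ _ ↦ G.μ_nonneg _

lemma sum_wU : ∑ u, G.wU u = 1 := by
  simp only [← G.μ_sum, Fintype.sum_prod_type, wU]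

/-- The matrix entry of the game operator at row `q = (u, α)` and column `p = (v, β)`: the
conditional probability given `u` that Bob's question is `v` and the constraint projects `β` to `α`.
It is `0` when `u` has probability zero, in accordance with the division by `G.wU u` in
`ProjGame.op`. -/
noncomputable def opKernel (q : G.Q1 × G.A) (p : G.Q2 × G.A) : ℝ :=
  (∑ π, if π p.2 = some q.2 then G.μ (q.1, p.1, π) else 0) / G.wU q.1

lemma opKernel_nonneg (q : G.Q1 × G.A) (p : G.Q2 × G.A) : 0 ≤ G.opKernel q p :=
  div_nonneg (sum_nonneg fun _ _ ↦ ite_nonneg (G.μ_nonneg _) le_rfl) (G.wU_nonneg q.1)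

lemma op_eq_sum_opKernel (f : G.Q2 × G.A → ℝ) (q : G.Q1 × G.A) :
    G.op f q = ∑ p, G.opKernel q p * f p := by
  simp only [op, opKernel, div_mul_eq_mul_div, ← sum_div, Fintype.sum_prod_type, sum_mul, mul_sum,
    mul_ite, ite_mul, mul_zero, zero_mul]
  exact congrArg (· / _) (sum_congr rfl fun v _ ↦ sum_comm)

lemma op_nonneg {f : G.Q2 × G.A → ℝ} (hf : ∀ p, 0 ≤ f p) (q : G.Q1 × G.A) : 0 ≤ G.op f q := by
  rw [op_eq_sum_opKernel]
  exact sum_nonneg fun p _ ↦ mul_nonneg (G.opKernel_nonneg q p) (hf p)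

lemma op_sum {ι : Type*} (s : Finset ι) (f : ι → G.Q2 × G.A → ℝ) (q : G.Q1 × G.A) :
    G.op (fun p ↦ ∑ i ∈ s, f i p) q = ∑ i ∈ s, G.op (f i) q := by
  simp only [op_eq_sum_opKernel, mul_sum]
  exact sum_comm

lemma op_const_mul (c : ℝ) (f : G.Q2 × G.A → ℝ) (q : G.Q1 × G.A) :
    G.op (fun p ↦ c * f p) q = c * G.op f q := by
  simp only [op_eq_sum_opKernel, mul_sum, mul_left_comm]

lemma sum_op_le_one {f : G.Q2 × G.A → ℝ} (hf : ∀ p, 0 ≤ f p) (hf1 : ∀ v, ∑ β, f (v, β) ≤ 1)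
    (u : G.Q1) : ∑ α, G.op f (u, α) ≤ 1 := by
  have answers_le (v : G.Q2) (π : G.A → Option G.A) :
      ∑ α, ∑ β, (if π β = some α then f (v, β) else 0) ≤ 1 := by
    rw [sum_comm]
    refine (sum_le_sum fun β _ ↦ ?_).trans (hf1 v)
    cases π β <;> simp [hf]
  calc ∑ α, G.op f (u, α)
      = (∑ v, ∑ π, G.μ (u, v, π) * ∑ α, ∑ β, if π β = some α then f (v, β) else 0) / G.wU u := by
        simp only [op, ← sum_div]
        rw [sum_comm]
        simp only [mul_sum (s := univ (α := G.A)) (f := fun _ ↦ ∑ _, _)]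
        exact congrArg (· / _) (sum_congr rfl fun v _ ↦ sum_comm)
    _ ≤ (∑ v, ∑ π, G.μ (u, v, π)) / G.wU u := by
        refine div_le_div_of_nonneg_right ?_ (G.wU_nonneg u)
        exact sum_le_sum fun v _ ↦ sum_le_sum fun π _ ↦
          mul_le_of_le_one_right (G.μ_nonneg _) (answers_le v π)
    _ ≤ 1 := div_self_le_one _

lemma op_le_one {f : G.Q2 × G.A → ℝ} (hf : G.IsBob f) (q : G.Q1 × G.A) : G.op f q ≤ 1 :=
  (single_le_sum (f := fun α ↦ G.op f (q.1, α)) (fun _ _ ↦ G.op_nonneg hf.1 _) (mem_univ q.2)).trans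
    (G.sum_op_le_one hf.1 (fun v ↦ (hf.2 v).le) q.1)

end Operator

section InnerProduct

lemma inn_eq_sum (g g' : G.Q1 × G.A → ℝ) : G.inn g g' = ∑ q, G.wU q.1 * (g q * g' q) := by
  simp only [inn, Fintype.sum_prod_type, mul_sum]

lemma normUsq_eq_sum (g : G.Q1 × G.A → ℝ) : G.normUsq g = ∑ q, G.wU q.1 * g q ^ 2 := by
  simp only [normUsq, Fintype.sum_prod_type, mul_sum]

lemma inn_comm (g g' : G.Q1 × G.A → ℝ) : G.inn g g' = G.inn g' g := by
  simp only [inn, mul_comm (g _)]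

lemma inn_self (g : G.Q1 × G.A → ℝ) : G.inn g g = G.normUsq g := by
  simp only [inn, normUsq, sq]

lemma normUsq_nonneg (g : G.Q1 × G.A → ℝ) : 0 ≤ G.normUsq g :=
  G.normUsq_eq_sum g ▸ sum_nonneg fun q _ ↦ mul_nonneg (G.wU_nonneg q.1) (sq_nonneg _)

lemma normUsq_const_mul (c : ℝ) (g : G.Q1 × G.A → ℝ) :
    G.normUsq (fun q ↦ c * g q) = c ^ 2 * G.normUsq g := by
  simp only [normUsq, mul_pow, ← mul_sum, mul_left_comm]

lemma normUsq_op_const_mul (c : ℝ) (f : G.Q2 × G.A → ℝ) :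
    G.normUsq (G.op fun p ↦ c * f p) = c ^ 2 * G.normUsq (G.op f) := by
  rw [← normUsq_const_mul]
  exact congrArg G.normUsq (funext (G.op_const_mul c f))

lemma inn_mono_left {g h g' : G.Q1 × G.A → ℝ} (hgh : ∀ q, g q ≤ h q) (hg' : ∀ q, 0 ≤ g' q) :
    G.inn g g' ≤ G.inn h g' := by
  simp only [inn_eq_sum]
  exact sum_le_sum fun q _ ↦ mul_le_mul_of_nonneg_left
    (mul_le_mul_of_nonneg_right (hgh q) (hg' q)) (G.wU_nonneg q.1)

lemma inn_one_le_one {g : G.Q1 × G.A → ℝ} (hg : ∀ u, ∑ α, g (u, α) ≤ 1) :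
    G.inn (fun _ ↦ 1) g ≤ 1 := by
  simp only [inn, one_mul]
  rw [← G.sum_wU]
  exact sum_le_sum fun u _ ↦ mul_le_of_le_one_right (G.wU_nonneg u) (hg u)

lemma normUsq_le_one {g : G.Q1 × G.A → ℝ} (hg : ∀ q, 0 ≤ g q) (hg1 : ∀ u, ∑ α, g (u, α) ≤ 1) :
    G.normUsq g ≤ 1 := by
  have le_one (q : G.Q1 × G.A) : g q ≤ 1 :=
    (single_le_sum (f := fun α ↦ g (q.1, α)) (fun _ _ ↦ hg _) (mem_univ q.2)).trans (hg1 q.1)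
  rw [← inn_self]
  exact (G.inn_mono_left le_one hg).trans (G.inn_one_le_one hg1)

lemma inn_sq_le_normUsq_mul_normUsq (g g' : G.Q1 × G.A → ℝ) :
    G.inn g g' ^ 2 ≤ G.normUsq g * G.normUsq g' := by
  rw [inn_eq_sum, normUsq_eq_sum, normUsq_eq_sum]
  exact sum_sq_le_sum_mul_sum_of_sq_le_mul univ
    (fun q _ ↦ mul_nonneg (G.wU_nonneg _) (sq_nonneg _))
    (fun q _ ↦ mul_nonneg (G.wU_nonneg _) (sq_nonneg _)) fun q _ ↦ le_of_eq (by ring)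

end InnerProduct

section CollisionKernel

/-- The matrix of the quadratic form `f ↦ ‖Gf‖²`: the probability that, for two constraints drawn
independently given a common Alice question, Bob's questions are `z.1.1` and `z.2.1` and his answers
`z.1.2` and `z.2.2` are projected to the same label. -/
noncomputable def collisionKernel (z : (G.Q2 × G.A) × (G.Q2 × G.A)) : ℝ :=
  ∑ q, G.wU q.1 * (G.opKernel q z.1 * G.opKernel q z.2)

lemma collisionKernel_nonneg (z : (G.Q2 × G.A) × (G.Q2 × G.A)) : 0 ≤ G.collisionKernel z :=
  sum_nonneg fun q _ ↦ mul_nonneg (G.wU_nonneg q.1)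
    (mul_nonneg (G.opKernel_nonneg q _) (G.opKernel_nonneg q _))

lemma inn_op_op (f f' : G.Q2 × G.A → ℝ) :
    G.inn (G.op f) (G.op f') = ∑ z, G.collisionKernel z * (f z.1 * f' z.2) := by
  simp only [inn_eq_sum, op_eq_sum_opKernel, sum_mul_sum]
  simp only [← Fintype.sum_prod_type']
  simp only [collisionKernel, mul_sum, sum_mul]
  rw [sum_comm]
  exact sum_congr rfl fun z _ ↦ sum_congr rfl fun q _ ↦ by ring

lemma normUsq_op (f : G.Q2 × G.A → ℝ) :
    G.normUsq (G.op f) = ∑ z, G.collisionKernel z * (f z.1 * f z.2) := by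
  rw [← inn_self, inn_op_op]

end CollisionKernel

section Assignments

lemma exists_isBob_eq_sum_mul {f : G.Q2 × G.A → ℝ} (hf : ∀ p, 0 ≤ f p) :
    ∃ h, G.IsBob h ∧ ∀ p, f p = (∑ β, f (p.1, β)) * h p := by
  let h (p : G.Q2 × G.A) : ℝ :=
    if ∑ β, f (p.1, β) = 0 then (Fintype.card G.A : ℝ)⁻¹ else f p / ∑ β, f (p.1, β)
  refine ⟨h, ⟨fun p ↦ ?_, fun v ↦ ?_⟩, fun p ↦ ?_⟩
  · exact ite_nonneg (by positivity) (div_nonneg (hf p) (sum_nonneg fun _ _ ↦ hf _))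
  · by_cases hv : ∑ β, f (v, β) = 0
    · simp [h, hv]
    · simp only [h, hv, if_false, ← sum_div, div_self, ne_eq, not_false_eq_true]
  · by_cases hp : ∑ β, f (p.1, β) = 0
    · rw [hp, zero_mul]
      exact (sum_eq_zero_iff_of_nonneg fun β _ ↦ hf (p.1, β)).1 hp p.2 (mem_univ _)
    · simp only [h, hp, if_false, mul_div_cancel₀, ne_eq, not_false_eq_true]

lemma exists_isBob : ∃ f, G.IsBob f :=
  (G.exists_isBob_eq_sum_mul (f := 0) fun _ ↦ le_rfl).imp fun _ ↦ And.left

lemma isCompact_setOf_isBob : IsCompact {f | G.IsBob f} := by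
  have isClosed_isBob : IsClosed {f | G.IsBob f} := by
    simp only [IsBob, Set.ofPred_and, Set.ofPred_forall]
    exact (isClosed_iInter fun p ↦ isClosed_le continuous_const (by fun_prop)).inter
      (isClosed_iInter fun v ↦ isClosed_eq (by fun_prop) continuous_const)
  refine (isCompact_Icc (a := 0) (b := 1)).of_isClosed_subset isClosed_isBob fun f hf ↦
    ⟨hf.1, fun p ↦ ?_⟩
  exact (single_le_sum (f := fun β ↦ f (p.1, β)) (fun _ _ ↦ hf.1 _) (mem_univ p.2)).trans_eq
    (hf.2 p.1)

/-- Add the missing mass of `Gf` uniformly to obtain an assignment for Alice. -/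
lemma exists_isAlice_op_le {f : G.Q2 × G.A → ℝ} (hf : G.IsBob f) :
    ∃ g, G.IsAlice g ∧ ∀ q, G.op f q ≤ g q := by
  let missing (u : G.Q1) : ℝ := (1 - ∑ α, G.op f (u, α)) / Fintype.card G.A
  have missing_nonneg (u : G.Q1) : 0 ≤ missing u :=
    div_nonneg (sub_nonneg.2 (G.sum_op_le_one hf.1 (fun v ↦ (hf.2 v).le) u)) (by positivity)
  refine ⟨fun q ↦ G.op f q + missing q.1,
    ⟨fun q ↦ add_nonneg (G.op_nonneg hf.1 q) (missing_nonneg _), fun u ↦ ?_⟩,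
    fun q ↦ le_add_of_nonneg_right (missing_nonneg _)⟩
  simp [missing, sum_add_distrib, mul_div_cancel₀]

end Assignments

section Values

lemma normUsq_op_le_one {f : G.Q2 × G.A → ℝ} (hf : G.IsBob f) : G.normUsq (G.op f) ≤ 1 :=
  G.normUsq_le_one (G.op_nonneg hf.1) (G.sum_op_le_one hf.1 fun v ↦ (hf.2 v).le)

lemma inn_le_sqrt_normUsq {g : G.Q1 × G.A → ℝ} (hg : G.IsAlice g) (g' : G.Q1 × G.A → ℝ) :
    G.inn g g' ≤ √(G.normUsq g') :=
  Real.le_sqrt_of_sq_le <| (G.inn_sq_le_normUsq_mul_normUsq g g').trans <|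
    mul_le_of_le_one_left (G.normUsq_nonneg g') (G.normUsq_le_one hg.1 fun u ↦ (hg.2 u).le)

lemma inn_op_le_val {f : G.Q2 × G.A → ℝ} {g : G.Q1 × G.A → ℝ} (hf : G.IsBob f)
    (hg : G.IsAlice g) : G.inn g (G.op f) ≤ G.val := by
  refine le_csSup ⟨1, ?_⟩ ⟨f, g, hf, hg, rfl⟩
  rintro _ ⟨f, g, hf, hg, rfl⟩
  exact (G.inn_le_sqrt_normUsq hg _).trans (Real.sqrt_le_one.2 (G.normUsq_op_le_one hf))

lemma sqrt_normUsq_op_le_collVal {f : G.Q2 × G.A → ℝ} (hf : G.IsBob f) :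
    √(G.normUsq (G.op f)) ≤ G.collVal := by
  refine le_csSup ⟨1, ?_⟩ ⟨f, hf, rfl⟩
  rintro _ ⟨f, hf, rfl⟩
  exact Real.sqrt_le_one.2 (G.normUsq_op_le_one hf)

lemma collVal_nonneg : 0 ≤ G.collVal := by
  obtain ⟨f, hf⟩ := G.exists_isBob
  exact (Real.sqrt_nonneg _).trans (G.sqrt_normUsq_op_le_collVal hf)

lemma normUsq_op_le_collVal_sq {f : G.Q2 × G.A → ℝ} (hf : G.IsBob f) :
    G.normUsq (G.op f) ≤ G.collVal ^ 2 :=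
  (Real.sqrt_le_left G.collVal_nonneg).1 (G.sqrt_normUsq_op_le_collVal hf)

lemma exists_isBob_normUsq_op_eq : ∃ f, G.IsBob f ∧ G.normUsq (G.op f) = G.collVal ^ 2 := by
  obtain ⟨f, hf, hmax⟩ := G.isCompact_setOf_isBob.exists_isMaxOn G.exists_isBob
    (f := fun f ↦ G.normUsq (G.op f)) (by simp only [normUsq_op]; fun_prop)
  refine ⟨f, hf, (G.normUsq_op_le_collVal_sq hf).antisymm ?_⟩
  refine (Real.le_sqrt G.collVal_nonneg (G.normUsq_nonneg _)).1 ?_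
  refine Real.sSup_le ?_ (Real.sqrt_nonneg _)
  rintro _ ⟨f', hf', rfl⟩
  exact Real.sqrt_le_sqrt (hmax hf')

lemma val_le_collVal : G.val ≤ G.collVal := by
  refine Real.sSup_le ?_ G.collVal_nonneg
  rintro _ ⟨f, g, hf, hg, rfl⟩
  exact (G.inn_le_sqrt_normUsq hg _).trans (G.sqrt_normUsq_op_le_collVal hf)

lemma collVal_le_sqrt_val : G.collVal ≤ √G.val := by
  refine Real.sSup_le ?_ (Real.sqrt_nonneg _)
  rintro _ ⟨f, hf, rfl⟩
  obtain ⟨g, hg, hfg⟩ := G.exists_isAlice_op_le hf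
  refine Real.sqrt_le_sqrt ?_
  rw [← inn_self]
  exact (G.inn_mono_left hfg (G.op_nonneg hf.1)).trans (G.inn_op_le_val hf hg)

end Values

section VectorAssignments

variable {ι : Type*} [Fintype ι]

/-- Correlated sampling: splice each `h i` into a maximiser `F` of the collision value on the level
set `{y i ≥ τ}` for a random `τ`. No splice beats `F`, and the contributions of `F` to the averages
add up to at least `card ι - 2` copies of its own value. -/
lemma sum_collisionKernel_mul_min_le {h : ι → G.Q2 × G.A → ℝ} (hh : ∀ i, G.IsBob (h i))
    {y : ι → G.Q2 → ℝ} (hy : ∀ i v, 0 ≤ y i v) (hy1 : ∀ v, ∑ i, y i v ≤ 1) :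
    ∑ i, ∑ z, G.collisionKernel z * (min (y i z.1.1) (y i z.2.1) * (h i z.1 * h i z.2)) ≤
      2 * G.collVal ^ 2 := by
  obtain ⟨F, hF, hmax⟩ := G.exists_isBob_normUsq_op_eq
  have y_le_one (i : ι) (v : G.Q2) : y i v ≤ 1 :=
    (single_le_sum (f := fun i ↦ y i v) (fun i _ ↦ hy i v) (mem_univ i)).trans (hy1 v)
  have splice_le (i : ι) : ∑ z, G.collisionKernel z *
      (min (y i z.1.1) (y i z.2.1) * (h i z.1 * h i z.2) +
        (1 - max (y i z.1.1) (y i z.2.1)) * (F z.1 * F z.2)) ≤ G.collVal ^ 2 := by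
    refine sum_min_add_one_sub_max_le (y := fun p ↦ y i p.1) G.collisionKernel_nonneg (hh i).1 hF.1
      (fun p ↦ ⟨hy i p.1, y_le_one i p.1⟩) fun τ ↦ ?_
    have isBob_splice : G.IsBob fun p ↦ if τ ≤ y i p.1 then h i p else F p := by
      refine ⟨fun p ↦ ite_nonneg ((hh i).1 p) (hF.1 p), fun v ↦ ?_⟩
      by_cases hv : τ ≤ y i v <;> simp [hv, (hh i).2, hF.2]
    exact (G.normUsq_op _).symm.trans_le (G.normUsq_op_le_collVal_sq isBob_splice)
  have sum_max_le (v v' : G.Q2) : ∑ i, max (y i v) (y i v') ≤ 2 :=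
    calc ∑ i, max (y i v) (y i v') ≤ ∑ i, (y i v + y i v') :=
          sum_le_sum fun i _ ↦ max_le_add_of_nonneg (hy i v) (hy i v')
      _ ≤ 2 := by rw [sum_add_distrib]; linarith [hy1 v, hy1 v']
  have F_part_ge : (Fintype.card ι - 2) * G.collVal ^ 2 ≤ ∑ i, ∑ z, G.collisionKernel z *
      ((1 - max (y i z.1.1) (y i z.2.1)) * (F z.1 * F z.2)) := by
    rw [← hmax, normUsq_op, mul_sum, sum_comm]
    refine sum_le_sum fun z _ ↦ ?_
    rw [← mul_sum, ← sum_mul, sum_sub_distrib, mul_left_comm]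
    refine mul_le_mul_of_nonneg_left (mul_le_mul_of_nonneg_right ?_
      (mul_nonneg (hF.1 _) (hF.1 _))) (G.collisionKernel_nonneg z)
    simp only [sum_const, card_univ, nsmul_eq_mul, mul_one]
    linarith [sum_max_le z.1.1 z.2.1]
  have sum_splice_le := sum_le_sum fun i (_ : i ∈ univ) ↦ splice_le i
  simp only [mul_add, sum_add_distrib, sum_const, card_univ, nsmul_eq_mul] at sum_splice_le
  linarith

lemma sum_inn_op_le_one {h f : ι → G.Q2 × G.A → ℝ} (hh : ∀ i, G.IsBob (h i))
    (hf : ∀ i p, 0 ≤ f i p) (hf1 : ∀ v, ∑ i, ∑ β, f i (v, β) ≤ 1) :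
    ∑ i, G.inn (G.op (h i)) (G.op (f i)) ≤ 1 :=
  calc ∑ i, G.inn (G.op (h i)) (G.op (f i))
      ≤ ∑ i, G.inn (fun _ ↦ 1) (G.op (f i)) :=
        sum_le_sum fun i _ ↦ G.inn_mono_left (G.op_le_one (hh i)) (G.op_nonneg (hf i))
    _ = G.inn (fun _ ↦ 1) (G.op fun p ↦ ∑ i, f i p) := by
        simp only [inn_eq_sum, op_sum, mul_sum, one_mul]
        exact sum_comm
    _ ≤ 1 := G.inn_one_le_one <| G.sum_op_le_one (fun p ↦ sum_nonneg fun i _ ↦ hf i p) fun v ↦ by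
        rw [sum_comm]
        exact hf1 v

lemma sum_collisionKernel_mul_max_le {h : ι → G.Q2 × G.A → ℝ} (hh : ∀ i, G.IsBob (h i))
    {y : ι → G.Q2 → ℝ} (hy : ∀ i v, 0 ≤ y i v) (hy1 : ∀ v, ∑ i, y i v ≤ 1) :
    ∑ i, ∑ z, G.collisionKernel z * (max (y i z.1.1) (y i z.2.1) * (h i z.1 * h i z.2)) ≤ 2 := by
  let yh (i : ι) (p : G.Q2 × G.A) : ℝ := y i p.1 * h i p
  have sum_inn_le : ∑ i, G.inn (G.op (h i)) (G.op (yh i)) ≤ 1 :=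
    G.sum_inn_op_le_one hh (fun i p ↦ mul_nonneg (hy i _) ((hh i).1 p)) fun v ↦ by
      simpa only [yh, ← mul_sum, (hh _).2, mul_one] using hy1 v
  calc ∑ i, ∑ z, G.collisionKernel z * (max (y i z.1.1) (y i z.2.1) * (h i z.1 * h i z.2))
      ≤ ∑ i, ∑ z, G.collisionKernel z * ((y i z.1.1 + y i z.2.1) * (h i z.1 * h i z.2)) :=
        sum_le_sum fun i _ ↦ sum_le_sum fun z _ ↦
          mul_le_mul_of_nonneg_left (mul_le_mul_of_nonneg_right
            (max_le_add_of_nonneg (hy i _) (hy i _)) (mul_nonneg ((hh i).1 _) ((hh i).1 _)))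
            (G.collisionKernel_nonneg z)
    _ = ∑ i, (G.inn (G.op (yh i)) (G.op (h i)) + G.inn (G.op (h i)) (G.op (yh i))) := by
        simp only [inn_op_op, ← sum_add_distrib]
        exact sum_congr rfl fun i _ ↦ sum_congr rfl fun z _ ↦ by ring
    _ ≤ 2 := by
        simp only [G.inn_comm (G.op (yh _)), sum_add_distrib]
        linarith

lemma sum_normUsq_op_le_two_mul_collVal {f : ι → G.Q2 × G.A → ℝ} (hf : ∀ i p, 0 ≤ f i p)
    (hf1 : ∀ v, ∑ i, (∑ β, f i (v, β)) ^ 2 ≤ 1) :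
    ∑ i, G.normUsq (G.op (f i)) ≤ 2 * G.collVal := by
  choose h hh hfh using fun i ↦ G.exists_isBob_eq_sum_mul (hf i)
  let x (i : ι) (v : G.Q2) : ℝ := ∑ β, f i (v, β)
  let w (k : ι × (G.Q2 × G.A) × (G.Q2 × G.A)) : ℝ :=
    G.collisionKernel k.2 * (h k.1 k.2.1 * h k.1 k.2.2)
  have w_nonneg (k) : 0 ≤ w k :=
    mul_nonneg (G.collisionKernel_nonneg _) (mul_nonneg ((hh _).1 _) ((hh _).1 _))
  have sum_eq : ∑ i, G.normUsq (G.op (f i)) =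
      ∑ k, w k * (x k.1 k.2.1.1 * x k.1 k.2.2.1) := by
    simp only [normUsq_op, ← Fintype.sum_prod_type']
    refine sum_congr rfl fun k _ ↦ ?_
    rw [hfh k.1 k.2.1, hfh k.1 k.2.2]
    ring
  have sum_min_le : ∑ k, w k * min (x k.1 k.2.1.1 ^ 2) (x k.1 k.2.2.1 ^ 2) ≤
      2 * G.collVal ^ 2 := by
    simpa only [Fintype.sum_prod_type (α₁ := ι), w, mul_assoc, mul_comm (min _ _)] using
      G.sum_collisionKernel_mul_min_le hh (y := fun i v ↦ x i v ^ 2) (fun _ _ ↦ sq_nonneg _) hf1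
  have sum_max_le : ∑ k, w k * max (x k.1 k.2.1.1 ^ 2) (x k.1 k.2.2.1 ^ 2) ≤ 2 := by
    simpa only [Fintype.sum_prod_type (α₁ := ι), w, mul_assoc, mul_comm (max _ _)] using
      G.sum_collisionKernel_mul_max_le hh (y := fun i v ↦ x i v ^ 2) (fun _ _ ↦ sq_nonneg _) hf1
  refine le_of_sq_le_sq ?_ (by linarith [G.collVal_nonneg])
  calc (∑ i, G.normUsq (G.op (f i))) ^ 2
      ≤ (∑ k, w k * min (x k.1 k.2.1.1 ^ 2) (x k.1 k.2.2.1 ^ 2)) *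
        ∑ k, w k * max (x k.1 k.2.1.1 ^ 2) (x k.1 k.2.2.1 ^ 2) := by
        rw [sum_eq]
        exact sq_sum_mul_le_sum_min_mul_sum_max univ (fun k _ ↦ w_nonneg k) _ _
    _ ≤ 2 * G.collVal ^ 2 * 2 := mul_le_mul sum_min_le sum_max_le
        (sum_nonneg fun k _ ↦ mul_nonneg (w_nonneg k) (by positivity)) (by positivity)
    _ = (2 * G.collVal) ^ 2 := by ring

lemma sum_wU_mul_sum_sum_sq_op (f : ι → G.Q2 × G.A → ℝ) :
    ∑ u, G.wU u * ∑ α, ∑ i, G.op (f i) (u, α) ^ 2 = ∑ i, G.normUsq (G.op (f i)) := by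
  simp only [normUsq, mul_sum]
  conv_rhs => rw [sum_comm]
  exact sum_congr rfl fun u _ ↦ sum_comm

lemma sqrt_sum_wU_mul_sum_sum_sq_op_le {f : G.Q2 × G.A → ι → ℝ} (hf : ∀ p i, 0 ≤ f p i)
    (hf1 : ∀ v, √(∑ i, (∑ β, f (v, β) i) ^ 2) ≤ 1) :
    √(∑ u, G.wU u * ∑ α, ∑ i, G.op (fun p ↦ f p i) (u, α) ^ 2) ≤ √(2 * G.collVal) := by
  rw [G.sum_wU_mul_sum_sum_sq_op fun i p ↦ f p i]
  exact Real.sqrt_le_sqrt <| G.sum_normUsq_op_le_two_mul_collVal (fun i p ↦ hf p i) fun v ↦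
    Real.sqrt_le_one.1 (hf1 v)

lemma valPlus_le_sqrt_two_mul_collVal : G.valPlus ≤ √(2 * G.collVal) := by
  refine Real.sSup_le ?_ (Real.sqrt_nonneg _)
  rintro _ ⟨n, -, f, hf, hf1, rfl⟩
  exact G.sqrt_sum_wU_mul_sum_sum_sq_op_le hf hf1

lemma valPlus_nonneg : 0 ≤ G.valPlus := by
  refine Real.sSup_nonneg ?_
  rintro _ ⟨n, -, f, -, -, rfl⟩
  exact Real.sqrt_nonneg _

lemma sqrt_sum_wU_mul_sum_sum_sq_op_le_valPlus {n : ℕ} (hn : 0 < n) {f : G.Q2 × G.A → Fin n → ℝ}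
    (hf : ∀ p i, 0 ≤ f p i) (hf1 : ∀ v, √(∑ i, (∑ β, f (v, β) i) ^ 2) ≤ 1) :
    √(∑ u, G.wU u * ∑ α, ∑ i, G.op (fun p ↦ f p i) (u, α) ^ 2) ≤ G.valPlus := by
  refine le_csSup ⟨√(2 * G.collVal), ?_⟩ ⟨n, hn, f, hf, hf1, rfl⟩
  rintro _ ⟨n, -, f, hf, hf1, rfl⟩
  exact G.sqrt_sum_wU_mul_sum_sum_sq_op_le hf hf1

lemma sum_normUsq_op_le_valPlus_sq {f : ι → G.Q2 × G.A → ℝ} (hf : ∀ i p, 0 ≤ f i p)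
    (hf1 : ∀ v, ∑ i, (∑ β, f i (v, β)) ^ 2 ≤ 1) :
    ∑ i, G.normUsq (G.op (f i)) ≤ G.valPlus ^ 2 := by
  cases isEmpty_or_nonempty ι
  · simp [sq_nonneg]
  let e := (Fintype.equivFin ι).symm
  have sqrt_le := G.sqrt_sum_wU_mul_sum_sum_sq_op_le_valPlus Fintype.card_pos
    (f := fun p j ↦ f (e j) p) (fun p j ↦ hf _ p) fun v ↦ by
      rw [e.sum_comp fun i ↦ (∑ β, f i (v, β)) ^ 2]
      exact Real.sqrt_le_one.2 (hf1 v)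
  rw [G.sum_wU_mul_sum_sum_sq_op fun j ↦ f (e j),
    e.sum_comp fun i ↦ G.normUsq (G.op (f i))] at sqrt_le
  exact (Real.sqrt_le_left G.valPlus_nonneg).1 sqrt_le

lemma sum_normUsq_op_le_valPlus_sq_mul {f : ι → G.Q2 × G.A → ℝ}
    (hf : ∀ i p, 0 ≤ f i p) {C : ℝ} (hfC : ∀ v, ∑ i, (∑ β, f i (v, β)) ^ 2 ≤ C) :
    ∑ i, G.normUsq (G.op (f i)) ≤ G.valPlus ^ 2 * C := by
  have C_nonneg : 0 ≤ C :=
    (sum_nonneg fun i _ ↦ sq_nonneg _).trans (hfC (Classical.arbitrary G.Q2))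
  obtain rfl | C_pos := C_nonneg.eq_or_lt
  · have f_eq_zero (i) (p : G.Q2 × G.A) : f i p = 0 := by
      have sum_eq_zero : ∑ β, f i (p.1, β) = 0 := by
        refine pow_eq_zero_iff two_ne_zero |>.1 (le_antisymm ?_ (sq_nonneg _))
        exact (single_le_sum (f := fun i ↦ (∑ β, f i (p.1, β)) ^ 2) (fun _ _ ↦ sq_nonneg _)
          (mem_univ i)).trans (hfC p.1)
      exact (sum_eq_zero_iff_of_nonneg fun β _ ↦ hf i (p.1, β)).1 sum_eq_zero p.2 (mem_univ _)
    simp [normUsq_op, f_eq_zero]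
  · have scaled_le := G.sum_normUsq_op_le_valPlus_sq (f := fun i p ↦ (√C)⁻¹ * f i p)
      (fun i p ↦ mul_nonneg (by positivity) (hf i p)) fun v ↦ by
        simp only [← mul_sum, mul_pow, inv_pow, Real.sq_sqrt C_pos.le]
        exact inv_mul_le_one_of_le₀ (hfC v) C_pos.le
    simp only [normUsq_op_const_mul, ← mul_sum, inv_pow, Real.sq_sqrt C_pos.le] at scaled_le
    rwa [inv_mul_le_iff₀' C_pos] at scaled_le

lemma collVal_le_valPlus : G.collVal ≤ G.valPlus := by
  refine Real.sSup_le ?_ G.valPlus_nonneg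
  rintro _ ⟨f, hf, rfl⟩
  refine (Real.sqrt_le_left G.valPlus_nonneg).2 ?_
  simpa using G.sum_normUsq_op_le_valPlus_sq (ι := Unit) (f := fun _ ↦ f) (fun _ ↦ hf.1)
    (by simp [hf.2])

lemma valPlus_le_rpow_of_val_le {ρ : ℝ} (hρ0 : 0 ≤ ρ) (hval : G.val ≤ ρ) :
    G.valPlus ≤ (4 * ρ) ^ (1 / 4 : ℝ) :=
  calc G.valPlus ≤ √(2 * √G.val) := G.valPlus_le_sqrt_two_mul_collVal.trans <|
        Real.sqrt_le_sqrt (by linarith [G.collVal_le_sqrt_val])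
    _ ≤ √(2 * √ρ) := by gcongr
    _ = √√(4 * ρ) := by
        rw [Real.sqrt_mul (by norm_num) ρ]
        congr 2
        norm_num
    _ = (4 * ρ) ^ (1 / 4 : ℝ) := by
        rw [Real.sqrt_eq_rpow, Real.sqrt_eq_rpow, ← Real.rpow_mul (by positivity)]
        norm_num

end VectorAssignments

section Tensor

lemma tensorC_apply_eq_some_iff {A A' : Type} {π : A → Option A} {π' : A' → Option A'}
    {b a : A × A'} : tensorC π π' b = some a ↔ π b.1 = some a.1 ∧ π' b.2 = some a.2 := by
  obtain ⟨a, a'⟩ := a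
  simp only [tensorC]
  cases π b.1 <;> cases π' b.2 <;> simp

variable (H : ProjGame)

lemma tensor_μ (q : G.Q1 × H.Q1) (p : G.Q2 × H.Q2) (σ : G.A × H.A → Option (G.A × H.A)) :
    (G.tensor H).μ (q, p, σ) =
      ∑ π, ∑ π', if tensorC π π' = σ then G.μ (q.1, p.1, π) * H.μ (q.2, p.2, π') else 0 := by
  obtain ⟨u, u'⟩ := q
  obtain ⟨v, v'⟩ := p
  simp only [tensor, Fintype.sum_prod_type, Prod.mk.injEq]
  simp only [ite_and, sum_ite_irrel, sum_const_zero, sum_ite_eq', mem_univ, if_true]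
  refine sum_congr rfl fun π _ ↦ ?_
  rw [sum_comm]
  simp only [sum_ite_eq', mem_univ, if_true]

lemma sum_tensor_μ_mul (q : G.Q1 × H.Q1) (p : G.Q2 × H.Q2)
    (φ : (G.A × H.A → Option (G.A × H.A)) → ℝ) :
    ∑ σ : G.A × H.A → Option (G.A × H.A), (G.tensor H).μ (q, p, σ) * φ σ =
      ∑ π, ∑ π', G.μ (q.1, p.1, π) * H.μ (q.2, p.2, π') * φ (tensorC π π') := by
  simp only [tensor_μ, sum_mul, ite_mul, zero_mul]
  rw [sum_comm]
  refine sum_congr rfl fun π _ ↦ ?_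
  rw [sum_comm]
  simp

lemma wU_tensor (q : G.Q1 × H.Q1) : (G.tensor H).wU q = G.wU q.1 * H.wU q.2 := by
  have marginal (v : G.Q2 × H.Q2) :
      ∑ σ : G.A × H.A → Option (G.A × H.A), (G.tensor H).μ (q, v, σ) =
      (∑ π, G.μ (q.1, v.1, π)) * ∑ π', H.μ (q.2, v.2, π') := by
    simpa [sum_mul_sum] using G.sum_tensor_μ_mul H q v fun _ ↦ 1
  calc (G.tensor H).wU q = ∑ v : G.Q2 × H.Q2,
        ∑ σ : G.A × H.A → Option (G.A × H.A), (G.tensor H).μ (q, v, σ) := rfl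
    _ = G.wU q.1 * H.wU q.2 := by
      simp only [marginal, Fintype.sum_prod_type, ← sum_mul_sum, wU]

lemma opKernel_tensor (q : (G.Q1 × H.Q1) × (G.A × H.A)) (p : (G.Q2 × H.Q2) × (G.A × H.A)) :
    (G.tensor H).opKernel q p = G.opKernel (q.1.1, q.2.1) (p.1.1, p.2.1) *
      H.opKernel (q.1.2, q.2.2) (p.1.2, p.2.2) := by
  have numerator := G.sum_tensor_μ_mul H q.1 p.1 fun π ↦ if π p.2 = some q.2 then 1 else 0
  simp only [tensorC_apply_eq_some_iff, mul_ite, mul_one, mul_zero] at numerator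
  simp only [opKernel, wU_tensor, div_mul_div_comm, sum_mul_sum]
  refine congrArg (· / _) (numerator.trans ?_)
  exact sum_congr rfl fun π _ ↦ sum_congr rfl fun π' _ ↦
    by split_ifs <;> simp_all

lemma op_tensor (f : (G.Q2 × H.Q2) × (G.A × H.A) → ℝ) (q : (G.Q1 × H.Q1) × (G.A × H.A)) :
    (G.tensor H).op f q =
      G.op (fun p ↦ H.op (fun p' ↦ f ((p.1, p'.1), (p.2, p'.2))) (q.1.2, q.2.2))
        (q.1.1, q.2.1) := by
  calc (G.tensor H).op f q
      = ∑ p : (G.Q2 × H.Q2) × (G.A × H.A), (G.tensor H).opKernel q p * f p :=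
        (G.tensor H).op_eq_sum_opKernel f q
    _ = ∑ p : G.Q2 × G.A, ∑ p' : H.Q2 × H.A,
        G.opKernel (q.1.1, q.2.1) p * H.opKernel (q.1.2, q.2.2) p' *
          f ((p.1, p'.1), (p.2, p'.2)) := by
        rw [← Fintype.sum_prod_type', ← (Equiv.prodProdProdComm G.Q2 G.A H.Q2 H.A).sum_comp]
        simp only [opKernel_tensor, Equiv.prodProdProdComm_apply]
    _ = _ := by simp only [op_eq_sum_opKernel, mul_sum, mul_assoc]

lemma normUsq_tensor (g : (G.Q1 × H.Q1) × (G.A × H.A) → ℝ) :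
    (G.tensor H).normUsq g =
      ∑ q' : H.Q1 × H.A, H.wU q'.1 * G.normUsq fun q ↦ g ((q.1, q'.1), (q.2, q'.2)) := by
  calc (G.tensor H).normUsq g
      = ∑ q : (G.Q1 × H.Q1) × (G.A × H.A), (G.tensor H).wU q.1 * g q ^ 2 :=
        (G.tensor H).normUsq_eq_sum g
    _ = ∑ q : G.Q1 × G.A, ∑ q' : H.Q1 × H.A,
        G.wU q.1 * H.wU q'.1 * g ((q.1, q'.1), (q.2, q'.2)) ^ 2 := by
        rw [← Fintype.sum_prod_type', ← (Equiv.prodProdProdComm G.Q1 G.A H.Q1 H.A).sum_comp]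
        simp only [wU_tensor, Equiv.prodProdProdComm_apply]
    _ = _ := by
        rw [sum_comm]
        simp only [normUsq_eq_sum, mul_sum, mul_assoc, mul_left_comm]

lemma normUsq_op_tensor (f : (G.Q2 × H.Q2) × (G.A × H.A) → ℝ) :
    (G.tensor H).normUsq ((G.tensor H).op f) = ∑ q', H.wU q'.1 *
      G.normUsq (G.op fun p ↦ H.op (fun p' ↦ f ((p.1, p'.1), (p.2, p'.2))) q') :=
  (G.normUsq_tensor H _).trans <| sum_congr rfl fun q' _ ↦ congrArg (H.wU q'.1 * G.normUsq ·) <|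
    funext fun q ↦ G.op_tensor H f ((q.1, q'.1), (q.2, q'.2))

lemma collVal_tensor_le : (G.tensor H).collVal ≤ G.valPlus * H.collVal := by
  have bound_nonneg := mul_nonneg G.valPlus_nonneg H.collVal_nonneg
  refine Real.sSup_le ?_ bound_nonneg
  rintro _ ⟨f, hf, rfl⟩
  refine (Real.sqrt_le_left bound_nonneg).2 ?_
  change (G.Q2 × H.Q2) × (G.A × H.A) → ℝ at f
  let h (q' : H.Q1 × H.A) (p : G.Q2 × G.A) : ℝ :=
    √(H.wU q'.1) * H.op (fun p' ↦ f ((p.1, p'.1), (p.2, p'.2))) q'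
  have h_nonneg (q' p) : 0 ≤ h q' p :=
    mul_nonneg (Real.sqrt_nonneg _) (H.op_nonneg (fun _ ↦ hf.1 _) q')
  have sum_h_sq_le (v : G.Q2) : ∑ q', (∑ β, h q' (v, β)) ^ 2 ≤ H.collVal ^ 2 := by
    have isBob_sum : H.IsBob fun p' ↦ ∑ β, f ((v, p'.1), (β, p'.2)) := by
      refine ⟨fun p' ↦ sum_nonneg fun _ _ ↦ hf.1 _, fun v' ↦ ?_⟩
      rw [sum_comm, ← Fintype.sum_prod_type']
      exact hf.2 (v, v')
    refine le_of_eq_of_le ?_ (H.normUsq_op_le_collVal_sq isBob_sum)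
    simp only [h, ← mul_sum, mul_pow, Real.sq_sqrt (H.wU_nonneg _), normUsq_eq_sum, op_sum]
  calc (G.tensor H).normUsq ((G.tensor H).op f)
      = ∑ q', H.wU q'.1 * G.normUsq (G.op fun p ↦
          H.op (fun p' ↦ f ((p.1, p'.1), (p.2, p'.2))) q') := G.normUsq_op_tensor H f
    _ = ∑ q', G.normUsq (G.op (h q')) := by
        simp only [h, normUsq_op_const_mul, Real.sq_sqrt (H.wU_nonneg _)]
    _ ≤ (G.valPlus * H.collVal) ^ 2 := by
        rw [mul_pow]
        exact G.sum_normUsq_op_le_valPlus_sq_mul h_nonneg sum_h_sq_le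

lemma collVal_iterTensor_le (n : ℕ) : (G.iterTensor n).collVal ≤ G.valPlus ^ (n + 1) := by
  induction n with
  | zero => exact G.collVal_le_valPlus.trans_eq (pow_one _).symm
  | succ n ih =>
    rw [pow_succ']
    exact (G.collVal_tensor_le (G.iterTensor n)).trans
      (mul_le_mul_of_nonneg_left ih G.valPlus_nonneg)

end Tensor

end ProjGame

/-- **Repetition of games with small value.** For any projection game `G` with
`val(G) ≤ ρ`, `val(G^{⊗k}) ≤ (4ρ)^{k/4}`. -/
theorem parallel_repetition_small_value (G : ProjGame) (ρ : ℝ) (hρ0 : 0 ≤ ρ) (hρ1 : ρ ≤ 1)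
    (hval : G.val ≤ ρ) (k : ℕ) (hk : 0 < k) :
    (G.iterTensor (k - 1)).val ≤ (4 * ρ) ^ ((k : ℝ) / 4) := by
  calc (G.iterTensor (k - 1)).val
      ≤ (G.iterTensor (k - 1)).collVal := (G.iterTensor (k - 1)).val_le_collVal
    _ ≤ G.valPlus ^ k := by
        simpa only [Nat.sub_add_cancel hk] using G.collVal_iterTensor_le (k - 1)
    _ ≤ ((4 * ρ) ^ (1 / 4 : ℝ)) ^ k :=
        pow_le_pow_left₀ G.valPlus_nonneg (G.valPlus_le_rpow_of_val_le hρ0 hval) k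
    _ = (4 * ρ) ^ ((k : ℝ) / 4) := by
        rw [← Real.rpow_mul_natCast (by positivity), one_div_mul_eq_div]
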